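/- There exists a (63,8)-separable permutation code of length 63 and minimum distance 62; that is, there is a subset C of the symmetric group on Fin 63 of cardinality 8·63 = 504 which is the disjoint union of 8 sets L₁,…,L₈, each of cardinality 63, such that any two distinct permutations in the same L_i are at Hamming distance 63, and any two permutations in different blocks L_i, L_j are at Hamming distance 62. -/

import Mathlib

/-- Hamming distance between two permutations of `Fin n`:
the number of points where they differ. -/
def permHammingDist {n : ℕ} (σ τ : Equiv.Perm (Fin n)) : ℕ :=
  (Finset.univ.filter fun x => σ x ≠ τ x).card

/-!
A difference matrix over a group `G` of order `n` yields a separable code: after subtracting a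
reference row from all the others, every remaining row `s` is a bijection onto `G`, and its
translates `x ↦ g + s x` form a block of `n` permutations with pairwise no coincidence, while
`g + s x = h + s' x` holds exactly where `s x - s' x = -g + h`, hence at a single `x`.

For `n = 63` a difference matrix with nine rows is grown from a `9 × 7` table over `𝔽₃² × ℤ/7`.
Each column of the table is translated by all `t ∈ 𝔽₃²`, the entry `(a, b)` in row `i` becoming
`(Mᵢ t + a, χ(t) b)`, where the `Mᵢ` are zero and the elements of the quaternion group in
`SL₂(𝔽₃)`, and `χ` is a homomorphism from `𝔽₃²` to the cubic roots of unity modulo `7`. Since the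
differences of the `Mᵢ` are invertible, every difference of two rows can be translated to have
`𝔽₃²`-component zero, so that injectivity has to be tested only there.
-/

open Function Matrix

section HammingDistance

variable {n : ℕ} {σ τ : Equiv.Perm (Fin n)}

theorem permHammingDist_self (σ : Equiv.Perm (Fin n)) : permHammingDist σ σ = 0 := by
  simp [permHammingDist]

theorem permHammingDist_eq_of_forall_ne (h : ∀ x, σ x ≠ τ x) : permHammingDist σ τ = n := by
  simp [permHammingDist, h]

theorem permHammingDist_eq_sub_one_of_existsUnique (h : ∃! x, σ x = τ x) :
    permHammingDist σ τ = n - 1 := by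
  have hone := (Fintype.existsUnique_iff_card_one _).mp h
  have hsum := Finset.card_filter_add_card_filter_not (s := Finset.univ) fun x => σ x = τ x
  rw [hone, Finset.card_univ, Fintype.card_fin] at hsum
  exact Nat.eq_sub_of_add_eq' hsum

end HammingDistance

/-- The blocks `L i` have size `r` and form a separable permutation code of length `n`: with `m`
indices `i`, this is an `(r, m)`-separable `(n, n - 1)`-PA. Disjointness of the blocks is left out,
as it follows from the distances when `2 ≤ n`. -/
structure IsSeparablePA {ι : Type*} {n : ℕ} (r : ℕ) (L : ι → Finset (Equiv.Perm (Fin n))) :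
    Prop where
  card_eq : ∀ i, (L i).card = r
  dist_eq : ∀ i, ∀ σ ∈ L i, ∀ τ ∈ L i, σ ≠ τ → permHammingDist σ τ = n
  dist_eq_sub_one : ∀ i j, i ≠ j → ∀ σ ∈ L i, ∀ τ ∈ L j, permHammingDist σ τ = n - 1

namespace IsSeparablePA

variable {ι : Type*} {n r : ℕ} {L : ι → Finset (Equiv.Perm (Fin n))}

theorem disjoint (hL : IsSeparablePA r L) (hn : 2 ≤ n) : Pairwise (Disjoint on L) := by
  refine fun i j hij => Finset.disjoint_left.mpr fun σ hi hj => ?_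
  have hdist := hL.dist_eq_sub_one i j hij σ hi σ hj
  rw [permHammingDist_self] at hdist
  omega

theorem card_biUnion [Fintype ι] (hL : IsSeparablePA r L) (hn : 2 ≤ n) :
    (Finset.univ.biUnion L).card = Fintype.card ι * r := by
  rw [Finset.card_biUnion ((hL.disjoint hn).set_pairwise _)]
  simp [hL.card_eq]

end IsSeparablePA

/-- A matrix with entries in a group, rows indexed by `ι` and columns by `X`, is a difference matrix
if the difference of any two distinct rows contains every group element exactly once. -/
def IsDifferenceMatrix {ι X G : Type*} [AddGroup G] (D : ι → X → G) : Prop :=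
  Pairwise fun i j => Bijective fun x => D i x - D j x

section TranslatedRow

variable {G : Type*} [AddGroup G] {n : ℕ}

/-- The permutation `x ↦ g + s x` attached to a bijective row `s` and a translation `g`, with the
values read as points through the labelling `e`. -/
def translatedRow (e : G ≃ Fin n) (s : Fin n ≃ G) (g : G) : Equiv.Perm (Fin n) :=
  (s.trans (Equiv.addLeft g)).trans e

variable (e : G ≃ Fin n)

theorem translatedRow_apply_eq_iff (s s' : Fin n ≃ G) (g h : G) (x : Fin n) :
    translatedRow e s g x = translatedRow e s' h x ↔ s x - s' x = -g + h := by
  simp only [translatedRow, Equiv.trans_apply, Equiv.coe_addLeft, EmbeddingLike.apply_eq_iff_eq]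
  rw [sub_eq_iff_eq_add, add_assoc, eq_neg_add_iff_add_eq]

theorem permHammingDist_translatedRow_of_ne (s : Fin n ≃ G) {g h : G} (hgh : g ≠ h) :
    permHammingDist (translatedRow e s g) (translatedRow e s h) = n := by
  refine permHammingDist_eq_of_forall_ne fun x hx => hgh ?_
  rw [translatedRow_apply_eq_iff, sub_self, eq_comm, neg_add_eq_zero] at hx
  exact hx

theorem permHammingDist_translatedRow_of_bijective_sub {s s' : Fin n ≃ G}
    (hs : Bijective fun x => s x - s' x) (g h : G) :
    permHammingDist (translatedRow e s g) (translatedRow e s' h) = n - 1 := by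
  refine permHammingDist_eq_sub_one_of_existsUnique ?_
  simpa only [translatedRow_apply_eq_iff] using hs.existsUnique (-g + h)

theorem translatedRow_injective (s : Fin n ≃ G) : Injective (translatedRow e s) := by
  intro g h hgh
  have hsub := (translatedRow_apply_eq_iff e s s g h (e 0)).mp (by rw [hgh])
  rwa [sub_self, eq_comm, neg_add_eq_zero] at hsub

theorem isSeparablePA_image_translatedRow [Fintype G] {ι : Type*} {s : ι → Fin n ≃ G}
    (hs : IsDifferenceMatrix fun i => ⇑(s i)) :
    IsSeparablePA n fun i => Finset.univ.image (translatedRow e (s i)) where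
  card_eq i := by
    rw [Finset.card_image_of_injective _ (translatedRow_injective e (s i)), Finset.card_univ,
      Fintype.card_congr e, Fintype.card_fin]
  dist_eq i := by
    simp only [Finset.forall_mem_image]
    intro g _ h _ hne
    exact permHammingDist_translatedRow_of_ne e (s i) (ne_of_apply_ne _ hne)
  dist_eq_sub_one i j hij := by
    simp only [Finset.forall_mem_image]
    intro g _ h _
    exact permHammingDist_translatedRow_of_bijective_sub e (hs hij) g h

theorem IsDifferenceMatrix.exists_isSeparablePA [Finite G] {X : Type*} {m : ℕ}
    {D : Fin (m + 1) → X → G} (hD : IsDifferenceMatrix D) (c : Fin n ≃ X) (e : G ≃ Fin n) :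
    ∃ L : Fin m → Finset (Equiv.Perm (Fin n)), IsSeparablePA n L := by
  have := Fintype.ofFinite G
  have hbij (i : Fin m) : Bijective fun x => D i.succ (c x) - D 0 (c x) :=
    (hD i.succ_ne_zero).comp c.bijective
  refine ⟨_, isSeparablePA_image_translatedRow e (s := fun i => .ofBijective _ (hbij i)) ?_⟩
  intro i j hij
  have hsub : Bijective fun x => D i.succ (c x) - D j.succ (c x) :=
    (hD ((Fin.succ_injective m).ne hij)).comp c.bijective
  simpa only [Equiv.ofBijective_apply, sub_sub_sub_cancel_right] using hsub

end TranslatedRow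

section TwistedDevelopment

variable {ι Y R V W : Type*} [Monoid R] [AddCommGroup V] [AddGroup W] [DistribMulAction R W]

/-- The matrix grown from a base matrix `B` over `V × W` by translating each of its columns by all
`v : V`: a translation moves row `i` by `M i v` in `V` and acts by the scalar `χ v` on `W`. -/
def twistedDevelopment (χ : AddChar V R) (M : ι → V →+ V) (B : ι → Y → V × W) (i : ι)
    (x : V × Y) : V × W :=
  (M i x.1 + (B i x.2).1, χ x.1 • (B i x.2).2)

variable {χ : AddChar V R} {M : ι → V →+ V} {B : ι → Y → V × W}

theorem twistedDevelopment_sub_translate (i j : ι) (v : V) (x : V × Y) :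
    twistedDevelopment χ M B i (v + x.1, x.2) - twistedDevelopment χ M B j (v + x.1, x.2) =
      (M i v - M j v + (twistedDevelopment χ M B i x - twistedDevelopment χ M B j x).1,
        χ v • (twistedDevelopment χ M B i x - twistedDevelopment χ M B j x).2) := by
  ext
  · simp only [twistedDevelopment, map_add, Prod.mk_sub_mk]
    abel
  · simp only [twistedDevelopment, AddChar.map_add_eq_mul, mul_smul, Prod.mk_sub_mk, smul_sub]

theorem injective_twistedDevelopment_sub {i j : ι} (hM : Surjective fun v => M i v - M j v)
    (hB : Set.InjOn (fun x => twistedDevelopment χ M B i x - twistedDevelopment χ M B j x)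
      {x | (twistedDevelopment χ M B i x - twistedDevelopment χ M B j x).1 = 0}) :
    Injective fun x => twistedDevelopment χ M B i x - twistedDevelopment χ M B j x := by
  intro x x' hx
  dsimp only at hx
  obtain ⟨v, hv : M i v - M j v = _⟩ :=
    hM (-(twistedDevelopment χ M B i x - twistedDevelopment χ M B j x).1)
  have heq : (v + x.1, x.2) = (v + x'.1, x'.2) := by
    apply hB <;> simp [twistedDevelopment_sub_translate, hv, ← hx, -Prod.fst_sub, -Prod.snd_sub]
  rw [Prod.mk.injEq, add_right_inj] at heq
  exact Prod.ext heq.1 heq.2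

theorem isDifferenceMatrix_twistedDevelopment [Finite V] [Finite W]
    (hYW : Nat.card Y = Nat.card W) (hM : IsDifferenceMatrix fun i => ⇑(M i))
    (hB : Pairwise fun i j =>
      Set.InjOn (fun x => twistedDevelopment χ M B i x - twistedDevelopment χ M B j x)
        {x | (twistedDevelopment χ M B i x - twistedDevelopment χ M B j x).1 = 0}) :
    IsDifferenceMatrix (twistedDevelopment χ M B) := fun i j hij =>
  (injective_twistedDevelopment_sub (hM hij).surjective (hB hij)).bijective_of_nat_card_le
    (by simp only [Nat.card_prod, hYW, le_refl])

end TwistedDevelopment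

theorem isDifferenceMatrix_mulVec {ι n R : Type*} [Fintype n] [DecidableEq n] [CommRing R]
    {A : ι → Matrix n n R} (hA : Pairwise fun i j => IsUnit (A i - A j).det) :
    IsDifferenceMatrix fun i => (A i).mulVec := by
  intro i j hij
  have hunit : IsUnit (A i - A j) := (isUnit_iff_isUnit_det _).mpr (hA hij)
  simp only [← sub_mulVec]
  exact ⟨mulVec_injective_of_isUnit hunit, mulVec_surjective_iff_isUnit.mpr hunit⟩

/-- The zero matrix followed by the elements `±1`, `±i`, `±j`, `±k` of the quaternion subgroup of
`SL₂(𝔽₃)`. -/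
def quaternionMatrix : Fin 9 → Matrix (Fin 2) (Fin 2) (ZMod 3) :=
  ![0, 1, -1, !![0, 2; 1, 0], !![0, 1; 2, 0], !![1, 1; 1, 2], !![2, 2; 2, 1],
    !![2, 1; 1, 1], !![1, 2; 2, 2]]

theorem isUnit_det_quaternionMatrix_sub :
    Pairwise fun i j => IsUnit (quaternionMatrix i - quaternionMatrix j).det := by
  simp only [Pairwise, isUnit_iff_ne_zero, det_fin_two]
  decide

/-- The additive character `t ↦ 2 ^ t₁` of `𝔽₃²`, with values in the cubic roots of unity modulo
`7`. -/
def cubicChar : AddChar (Fin 2 → ZMod 3) (ZMod 7) :=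
  (AddChar.zmodChar 3 (ζ := (2 : ZMod 7)) (by decide)).compAddMonoidHom
    (Pi.evalAddMonoidHom _ 1)

/-- The base columns of a difference matrix over `𝔽₃² × ℤ/7`, to be developed along `cubicChar`
with the rows moved by `quaternionMatrix`. -/
def baseMatrix : Fin 9 → Fin 7 → (Fin 2 → ZMod 3) × ZMod 7 :=
  ![
    ![(![0, 0], 0), (![0, 0], 0), (![0, 0], 0), (![0, 0], 0),
      (![0, 0], 0), (![0, 0], 0), (![0, 0], 0)],
    ![(![0, 0], 0), (![0, 0], 1), (![0, 0], 2), (![0, 0], 3),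
      (![0, 0], 4), (![0, 0], 5), (![0, 0], 6)],
    ![(![0, 2], 0), (![1, 0], 5), (![0, 0], 3), (![2, 1], 2),
      (![2, 0], 6), (![1, 1], 1), (![0, 1], 4)],
    ![(![1, 1], 4), (![2, 0], 3), (![0, 2], 3), (![2, 0], 1),
      (![1, 1], 0), (![2, 1], 5), (![0, 1], 2)],
    ![(![2, 1], 4), (![0, 0], 4), (![2, 1], 1), (![2, 1], 6),
      (![0, 0], 6), (![0, 2], 0), (![1, 0], 6)],
    ![(![0, 2], 2), (![0, 0], 5), (![0, 2], 0), (![2, 2], 1),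
      (![0, 1], 5), (![0, 1], 4), (![1, 2], 6)],
    ![(![2, 2], 2), (![2, 2], 4), (![2, 1], 3), (![0, 1], 3),
      (![2, 1], 2), (![2, 2], 3), (![1, 0], 0)],
    ![(![2, 2], 1), (![2, 2], 0), (![1, 1], 6), (![0, 2], 3),
      (![0, 0], 6), (![1, 2], 4), (![1, 1], 2)],
    ![(![2, 1], 1), (![1, 0], 5), (![1, 0], 1), (![2, 2], 0),
      (![2, 1], 2), (![2, 0], 5), (![2, 1], 5)]]

/-- A difference matrix with nine rows over the group `𝔽₃² × ℤ/7` of order 63. -/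
def differenceMatrix : Fin 9 → (Fin 2 → ZMod 3) × Fin 7 → (Fin 2 → ZMod 3) × ZMod 7 :=
  twistedDevelopment cubicChar (fun i => (quaternionMatrix i).mulVecLin.toAddMonoidHom) baseMatrix

theorem injOn_differenceMatrix_sub :
    Pairwise fun i j => Set.InjOn (fun x => differenceMatrix i x - differenceMatrix j x)
      {x | (differenceMatrix i x - differenceMatrix j x).1 = 0} := by
  simp only [Pairwise, Set.InjOn, Set.mem_ofPred_eq]
  decide +kernel

theorem isDifferenceMatrix_differenceMatrix : IsDifferenceMatrix differenceMatrix :=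
  isDifferenceMatrix_twistedDevelopment (by simp)
    (isDifferenceMatrix_mulVec isUnit_det_quaternionMatrix_sub) injOn_differenceMatrix_sub

/-- There exists a (63,8)-separable permutation code of length 63 and minimum
distance 62: a disjoint union of 8 blocks of 63 permutations each (so 504
codewords in total), with Hamming distance 63 between distinct permutations in
the same block and Hamming distance 62 between permutations in different blocks. -/
theorem separable_PA_63_8 :
    ∃ L : Fin 8 → Finset (Equiv.Perm (Fin 63)),
      (∀ i, (L i).card = 63) ∧
      (∀ i j, i ≠ j → Disjoint (L i) (L j)) ∧
      (Finset.univ.biUnion L).card = 504 ∧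
      (∀ i, ∀ σ ∈ L i, ∀ τ ∈ L i, σ ≠ τ → permHammingDist σ τ = 63) ∧
      (∀ i j, i ≠ j → ∀ σ ∈ L i, ∀ τ ∈ L j, permHammingDist σ τ = 62) := by
  obtain ⟨L, hL⟩ := isDifferenceMatrix_differenceMatrix.exists_isSeparablePA
    (Fintype.equivFinOfCardEq (by simp)).symm (Fintype.equivFinOfCardEq (by simp) : _ ≃ Fin 63)
  have hn : 2 ≤ 63 := by decide
  exact ⟨L, hL.card_eq, fun i j hij => hL.disjoint hn hij, hL.card_biUnion hn, hL.dist_eq,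
    hL.dist_eq_sub_one⟩
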